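/- Let 1 ≤ N ≤ m and, for j = 1, …, m, let w_j ≥ 0, b_j ≥ 0, c_j ≥ 0 be real numbers with ∑_{j=1}^N w_j·c_j > 0. Let p > 0, q > 0 and q' < 0 be real numbers such that q·b_j − p·c_j ≥ 0 for all j ≤ N and p·c_j − q·b_j ≥ 0 for all j > N. If ∑_{j=1}^m w_j·|p·c_j − q·b_j| = ∑_{j=1}^m w_j·|p·c_j − q'·b_j|, then q + q' > 0. -/

import Mathlib

theorem stmt_9 (m N : ℕ) (hN : 1 ≤ N) (hNm : N ≤ m) (w b c : ℕ → ℝ)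
    (hw : ∀ j ∈ Finset.Icc 1 m, 0 ≤ w j)
    (hb : ∀ j ∈ Finset.Icc 1 m, 0 ≤ b j)
    (hc : ∀ j ∈ Finset.Icc 1 m, 0 ≤ c j)
    (hpos : 0 < ∑ j ∈ Finset.Icc 1 N, w j * c j)
    (p q q' : ℝ) (hp : 0 < p) (hq : 0 < q) (hq' : q' < 0)
    (h1 : ∀ j ∈ Finset.Icc 1 N, 0 ≤ q * b j - p * c j)
    (h2 : ∀ j ∈ Finset.Icc (N + 1) m, 0 ≤ p * c j - q * b j)
    (heq : ∑ j ∈ Finset.Icc 1 m, w j * |p * c j - q * b j| =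
           ∑ j ∈ Finset.Icc 1 m, w j * |p * c j - q' * b j|) :
    0 < q + q' := by
  by_contra! hqq
  obtain ⟨k, hkN, hk⟩ : ∃ k ∈ Finset.Icc 1 N, 0 < w k * c k :=
    Finset.exists_lt_of_sum_lt (f := fun _ => (0 : ℝ)) (by simpa using hpos)
  have hkm : k ∈ Finset.Icc 1 m := Finset.Icc_subset_Icc_right hNm hkN
  refine heq.not_lt (Finset.sum_lt_sum (fun j hj => ?_) ⟨k, hkm, ?_⟩)
  · refine mul_le_mul_of_nonneg_left ?_ (hw j hj)
    have hbq : (q + q') * b j ≤ 0 := mul_nonpos_of_nonpos_of_nonneg hqq (hb j hj)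
    have hpc : 0 ≤ p * c j := mul_nonneg hp.le (hc j hj)
    have hqb : 0 ≤ q * b j := mul_nonneg hq.le (hb j hj)
    refine (abs_le.2 ⟨?_, ?_⟩).trans (le_abs_self _) <;> linarith
  · have hck : 0 < c k := pos_of_mul_pos_right hk (hw k hkm)
    have hwk : 0 < w k := pos_of_mul_pos_left hk hck.le
    refine mul_lt_mul_of_pos_left ?_ hwk
    have hbq : (q + q') * b k ≤ 0 := mul_nonpos_of_nonpos_of_nonneg hqq (hb k hkm)
    have hpc : 0 < p * c k := mul_pos hp hck
    have hqb := h1 k hkN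
    refine (abs_lt.2 ⟨?_, ?_⟩).trans_le (le_abs_self _) <;> linarith
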